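/- Let Θ' < Θ be polarizations. Then: (a) C¹(R) ⊂ W¹(R) ⊂ W_*(R;Θ) ⊂ L²(R) and W^{1−ε}(R) ⊂ W_†(R;Θ) ⊂ W^{−ε}(R), all inclusions being continuous; (b) W_*(R;Θ) ⊂ W_*(R;Θ') and W_†(R;Θ) ⊂ W_†(R;Θ') continuously; (c) the inclusion W_*(R;Θ) ⊂ W_†(R;Θ) is a compact operator. -/

import Mathlib

noncomputable section
open MeasureTheory Filter Finset Function Set Real Topology
open scoped ENNReal NNReal

namespace AngleMult

/-! ### Anisotropic Sobolev norms on `ℝ²` -/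

/-- Euclidean magnitude on `ℝ × ℝ`. -/
def en (v : ℝ × ℝ) : ℝ := Real.sqrt (v.1 ^ 2 + v.2 ^ 2)

/-- Fourier transform on `ℝ²`. -/
def FT (u : ℝ × ℝ → ℂ) (ξ : ℝ × ℝ) : ℂ :=
  ∫ x : ℝ × ℝ, Complex.exp (-(2 * Real.pi * (x.1 * ξ.1 + x.2 * ξ.2)) * Complex.I) * u x

/-- Inverse Fourier transform on `ℝ²`. -/
def invFT (u : ℝ × ℝ → ℂ) (x : ℝ × ℝ) : ℂ :=
  ∫ ξ : ℝ × ℝ, Complex.exp ((2 * Real.pi * (x.1 * ξ.1 + x.2 * ξ.2)) * Complex.I) * u ξ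

/-- The rectangle `R = (-η,η) × (δ,2δ)`. -/
def Rset (η δ : ℝ) : Set (ℝ × ℝ) := Set.Ioo (-η) η ×ˢ Set.Ioo δ (2 * δ)

/-- The rectangle `Q = (-2η,2η) × (0,3δ)`. -/
def Qset (η δ : ℝ) : Set (ℝ × ℝ) := Set.Ioo (-(2 * η)) (2 * η) ×ˢ Set.Ioo 0 (3 * δ)

/-- `C ⋐ C'`: the closure of `C` is contained in the interior of `C'` except for the
origin. -/
def Csub (C C' : Set (ℝ × ℝ)) : Prop := closure C \ {0} ⊆ interior C'

/-- A polarization `Θ = (C₊, C₋, φ₊, φ₋)`: a pair of closed cones intersecting only at `0`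
together with smooth functions on the unit circle (encoded as positively homogeneous
functions of degree `0` on `ℝ² ∖ {0}`) adapted to them. -/
structure Polarization where
  Cp : Set (ℝ × ℝ)
  Cm : Set (ℝ × ℝ)
  phip : ℝ × ℝ → ℝ
  phim : ℝ × ℝ → ℝ
  closed_p : IsClosed Cp
  closed_m : IsClosed Cm
  cone_p : ∀ (c : ℝ) v, v ∈ Cp → c • v ∈ Cp
  cone_m : ∀ (c : ℝ) v, v ∈ Cm → c • v ∈ Cm
  inter_eq : Cp ∩ Cm = {0}
  smooth_p : ContDiffOn ℝ (⊤ : ℕ∞) phip {v : ℝ × ℝ | v ≠ 0}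
  smooth_m : ContDiffOn ℝ (⊤ : ℕ∞) phim {v : ℝ × ℝ | v ≠ 0}
  homog_p : ∀ c : ℝ, 0 < c → ∀ v, phip (c • v) = phip v
  mem_Icc_p : ∀ v, phip v ∈ Set.Icc (0 : ℝ) 1
  one_on_p : ∀ v ∈ Cp, v ≠ 0 → phip v = 1
  zero_on_m : ∀ v ∈ Cm, v ≠ 0 → phip v = 0
  phim_def : ∀ v, phim v = 1 - phip v

/-- The order `Θ < Θ'` on polarizations: `ℝ² ∖ C'₊ ⋐ C₋`. -/
def PolLt (Θ Θ' : Polarization) : Prop := Csub (Set.univ \ Θ'.Cp) Θ.Cm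

/-- Admissibility of the fixed bump function `χ`. -/
def ChiOK (χ : ℝ → ℝ) : Prop :=
  ContDiff ℝ (⊤ : ℕ∞) χ ∧ (∀ s ≤ (1 : ℝ), χ s = 1) ∧ (∀ s, (2 : ℝ) ≤ s → χ s = 0) ∧
    ∀ s, χ s ∈ Set.Icc (0 : ℝ) 1

/-- The Littlewood-Paley functions `ψ_{Θ,n,σ}` (`σ = true` is `+`, `σ = false` is `-`). -/
def psiLP (χ : ℝ → ℝ) (Θ : Polarization) (n : ℕ) (σ : Bool) (ξ : ℝ × ℝ) : ℝ :=
  if n = 0 then χ (en ξ) / 2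
  else (if σ then Θ.phip ξ else Θ.phim ξ) *
    (χ ((2 : ℝ) ^ (-(n : ℤ)) * en ξ) - χ ((2 : ℝ) ^ (-(n : ℤ) + 1) * en ξ))

/-- The pseudo-differential operator `ψ_{Θ,n,σ}(D) u = 𝓕⁻¹(ψ_{Θ,n,σ} · 𝓕u)`. -/
def psiD (χ : ℝ → ℝ) (Θ : Polarization) (n : ℕ) (σ : Bool) (u : ℝ × ℝ → ℂ) :
    ℝ × ℝ → ℂ :=
  invFT fun ξ => (psiLP χ Θ n σ ξ : ℂ) * FT u ξ

/-- The partial norm `‖u‖^σ_{Θ,p} = (∑_n 2^{2pn} ‖ψ_{Θ,n,σ}·𝓕u‖²_{L²})^{1/2}`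
(`ℝ≥0∞`-valued). -/
def segNorm (χ : ℝ → ℝ) (Θ : Polarization) (p : ℝ) (σ : Bool) (u : ℝ × ℝ → ℂ) : ℝ≥0∞ :=
  (∑' n : ℕ, ENNReal.ofReal ((2 : ℝ) ^ (2 * p * (n : ℝ))) *
      (eLpNorm (fun ξ => (psiLP χ Θ n σ ξ : ℂ) * FT u ξ) 2 volume) ^ 2) ^ (1 / 2 : ℝ)

/-- The anisotropic Sobolev norm `‖u‖_{Θ,p,q}`. -/
def anorm (χ : ℝ → ℝ) (Θ : Polarization) (p q : ℝ) (u : ℝ × ℝ → ℂ) : ℝ≥0∞ :=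
  ((segNorm χ Θ p true u) ^ 2 + (segNorm χ Θ q false u) ^ 2) ^ (1 / 2 : ℝ)

/-- The (usual) Sobolev norm of order `s` of `u`, via the Fourier transform. -/
def wnorm (s : ℝ) (u : ℝ × ℝ → ℂ) : ℝ≥0∞ :=
  eLpNorm (fun ξ => ((1 + en ξ ^ 2) ^ (s / 2) : ℝ) * FT u ξ) 2 volume

/-- `u ∈ C^r(R)`: a `C^r` function supported in `R`. -/
def CrSupp (r : ℕ) (η δ : ℝ) (u : ℝ × ℝ → ℂ) : Prop :=
  ContDiff ℝ r u ∧ Function.support u ⊆ Rset η δ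

/-- `u ∈ C^∞(R)`: a `C^∞` function supported in `R`. -/
def SmoothSupp (η δ : ℝ) (u : ℝ × ℝ → ℂ) : Prop :=
  ContDiff ℝ (⊤ : ℕ∞) u ∧ Function.support u ⊆ Rset η δ

section Planch
open FourierTransform SchwartzMap

/-- Plancherel for `L¹ ∩ L²`. -/
lemma planch_aux {E : Type*} [NormedAddCommGroup E] [InnerProductSpace ℝ E]
    [FiniteDimensional ℝ E] [MeasurableSpace E] [BorelSpace E]
    (f : E → ℂ) (h1 : Integrable f) (h2 : MemLp f 2) :
    eLpNorm (𝓕 f : E → ℂ) 2 volume = eLpNorm f 2 volume := by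
  set F : Lp ℂ 2 (volume : Measure E) := h2.toLp f with hF
  have hcont : Continuous (𝓕 f : E → ℂ) :=
    VectorFourier.fourierIntegral_continuous Real.continuous_fourierChar
      (innerSL ℝ).continuous₂ h1
  have key : ∀ᵐ x, (𝓕 F : Lp ℂ 2 (volume : Measure E)) x = 𝓕 f x := by
    apply ae_eq_of_integral_contDiff_smul_eq
    · exact (Lp.memLp (𝓕 F)).locallyIntegrable (by norm_num)
    · exact hcont.locallyIntegrable
    intro g hg hgs
    have hgs' : HasCompactSupport (fun x => (g x : ℂ)) :=
      hgs.comp_left (g := fun r : ℝ => (r : ℂ)) (by simp)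
    have hg' : ContDiff ℝ (⊤ : ℕ∞) (fun x => (g x : ℂ)) :=
      Complex.ofRealCLM.contDiff.comp hg
    let G : 𝓢(E, ℂ) := hgs'.toSchwartzMap hg'
    have hG : ∀ x, G x = (g x : ℂ) := fun x => rfl
    have e1 := Lp.fourier_toTemperedDistribution_eq F
    have e2 := congrArg (fun T => T G) e1
    simp only [TemperedDistribution.fourier_apply, Lp.toTemperedDistribution_apply] at e2
    have e3 : ∫ x, (𝓕 G) x • F x = ∫ x, (𝓕 G) x • f x := by
      apply integral_congr_ae
      filter_upwards [h2.coeFn_toLp] with x hx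
      rw [hx]
    have e4 : ∫ x, (𝓕 f x) • (G x) = ∫ x, f x • (𝓕 (G : E → ℂ) x) := by
      have := VectorFourier.integral_fourierIntegral_smul_eq_flip (μ := (volume : Measure E))
        (ν := (volume : Measure E)) (L := innerₗ E) (f := f) (g := (G : E → ℂ))
        Real.continuous_fourierChar
        (innerSL ℝ).continuous₂ h1 G.integrable
      rw [flip_innerₗ] at this
      exact this
    have e5 : ∀ x, (g x : ℝ) • (𝓕 F : Lp ℂ 2 (volume : Measure E)) x = G x • (𝓕 F : Lp ℂ 2 (volume : Measure E)) x := by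
      intro x; rw [hG]; simp
    have e6 : ∀ x, (g x : ℝ) • 𝓕 f x = 𝓕 f x • G x := by
      intro x; rw [hG]; simp [mul_comm]
    simp_rw [e5, e6]
    rw [← e2, e3, e4]
    congr 1
    ext x
    rw [SchwartzMap.fourier_coe, smul_eq_mul, smul_eq_mul, mul_comm]
  have h3 : eLpNorm (𝓕 F : Lp ℂ 2 (volume : Measure E)) 2 volume = eLpNorm F 2 volume := by
    have := Lp.norm_fourier_eq F
    rw [Lp.norm_def, Lp.norm_def] at this
    exact (ENNReal.toReal_eq_toReal_iff' (Lp.eLpNorm_ne_top _) (Lp.eLpNorm_ne_top _)).1 this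
  rw [← eLpNorm_congr_ae key, h3]
  exact eLpNorm_congr_ae h2.coeFn_toLp

lemma FT_eq (u : ℝ × ℝ → ℂ) (ξ : ℝ × ℝ) :
    FT u ξ = 𝓕 (fun x : WithLp 2 (ℝ × ℝ) => u (WithLp.ofLp x)) (WithLp.toLp 2 ξ) := by
  rw [Real.fourier_eq', FT]
  rw [← (WithLp.volume_preserving_ofLp ℝ ℝ).integral_comp
    (MeasurableEquiv.toLp 2 (ℝ × ℝ)).symm.measurableEmbedding]
  congr 1
  ext x
  rw [smul_eq_mul]
  congr 2
  simp [WithLp.prod_inner_apply]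
  ring

lemma FT_continuous (u : ℝ × ℝ → ℂ) (h1 : Integrable u) : Continuous (FT u) := by
  have : FT u = (𝓕 (fun x : WithLp 2 (ℝ × ℝ) => u (WithLp.ofLp x))) ∘ (WithLp.toLp 2) := by
    ext ξ; exact FT_eq u ξ
  rw [this]
  refine Continuous.comp ?_ (WithLp.prod_continuous_toLp 2 ℝ ℝ)
  exact VectorFourier.fourierIntegral_continuous Real.continuous_fourierChar
      (innerSL ℝ).continuous₂ ((WithLp.volume_preserving_ofLp ℝ ℝ).integrable_comp_of_integrable h1)

lemma planch (u : ℝ × ℝ → ℂ) (h1 : Integrable u) (h2 : MemLp u 2) :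
    eLpNorm (FT u) 2 volume = eLpNorm u 2 volume := by
  have : FT u = (𝓕 (fun x : WithLp 2 (ℝ × ℝ) => u (WithLp.ofLp x))) ∘ (WithLp.toLp 2) := by
    ext ξ; exact FT_eq u ξ
  have mp := WithLp.volume_preserving_ofLp ℝ ℝ
  have i1 : Integrable (fun x : WithLp 2 (ℝ × ℝ) => u (WithLp.ofLp x)) :=
    mp.integrable_comp_of_integrable h1
  have i2 : MemLp (fun x : WithLp 2 (ℝ × ℝ) => u (WithLp.ofLp x)) 2 :=
    h2.comp_measurePreserving mp
  rw [this, eLpNorm_comp_measurePreserving _ (WithLp.volume_preserving_toLp ℝ ℝ),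
    planch_aux _ i1 i2]
  · exact eLpNorm_comp_measurePreserving h2.1 mp
  · exact (VectorFourier.fourierIntegral_continuous Real.continuous_fourierChar
      (innerSL ℝ).continuous₂ i1).aestronglyMeasurable

end Planch

/-! ### Pointwise weights -/

/-- dyadic pieces -/
def aLP (χ : ℝ → ℝ) (n : ℕ) (ξ : ℝ × ℝ) : ℝ :=
  if n = 0 then χ (en ξ)
  else χ ((2 : ℝ) ^ (-(n : ℤ)) * en ξ) - χ ((2 : ℝ) ^ (-(n : ℤ) + 1) * en ξ)

/-- angular pieces -/
def cLP (Θ : Polarization) (n : ℕ) (ξ : ℝ × ℝ) : ℝ := if n = 0 then 1 / 2 else Θ.phip ξ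

lemma psi_true (χ : ℝ → ℝ) (Θ : Polarization) (n : ℕ) (ξ : ℝ × ℝ) :
    psiLP χ Θ n true ξ = cLP Θ n ξ * aLP χ n ξ := by
  by_cases hn : n = 0
  · simp only [psiLP, cLP, aLP, hn, if_true]; ring
  · simp only [psiLP, cLP, aLP, hn, if_true, if_false]

lemma psi_false (χ : ℝ → ℝ) (Θ : Polarization) (n : ℕ) (ξ : ℝ × ℝ) :
    psiLP χ Θ n false ξ = (1 - cLP Θ n ξ) * aLP χ n ξ := by
  by_cases hn : n = 0
  · simp only [psiLP, cLP, aLP, hn, if_true]; ring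
  · simp [psiLP, cLP, aLP, hn, Θ.phim_def]

lemma cLP_mem (Θ : Polarization) (n : ℕ) (ξ : ℝ × ℝ) : 0 ≤ cLP Θ n ξ ∧ cLP Θ n ξ ≤ 1 := by
  unfold cLP
  split_ifs
  · norm_num
  · exact Θ.mem_Icc_p ξ

/-- the weight at level `n` -/
def Tw (χ : ℝ → ℝ) (Θ : Polarization) (p q : ℝ) (n : ℕ) (ξ : ℝ × ℝ) : ℝ :=
  (2 : ℝ) ^ (2 * p * (n : ℝ)) * (cLP Θ n ξ * aLP χ n ξ) ^ 2 +
  (2 : ℝ) ^ (2 * q * (n : ℝ)) * ((1 - cLP Θ n ξ) * aLP χ n ξ) ^ 2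

/-- the total weight -/
def Jw (χ : ℝ → ℝ) (Θ : Polarization) (p q : ℝ) (ξ : ℝ × ℝ) : ℝ≥0∞ :=
  ∑' n : ℕ, ENNReal.ofReal (Tw χ Θ p q n ξ)

lemma Tw_nonneg (χ : ℝ → ℝ) (Θ : Polarization) (p q : ℝ) (n : ℕ) (ξ : ℝ × ℝ) :
    0 ≤ Tw χ Θ p q n ξ := by unfold Tw; positivity

lemma en_nonneg (ξ : ℝ × ℝ) : 0 ≤ en ξ := Real.sqrt_nonneg _

lemma en_continuous : Continuous en := by unfold en; fun_prop

lemma en_sq (ξ : ℝ × ℝ) : en ξ ^ 2 = ξ.1 ^ 2 + ξ.2 ^ 2 := by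
  unfold en; rw [Real.sq_sqrt (by positivity)]

lemma two_zpow_neg (n : ℕ) : (2 : ℝ) ^ (-(n : ℤ)) = ((2 : ℝ) ^ n)⁻¹ := by
  rw [zpow_neg, zpow_natCast]

lemma two_zpow_neg' (n : ℕ) : (2 : ℝ) ^ (-(n : ℤ) + 1) = 2 * ((2 : ℝ) ^ n)⁻¹ := by
  rw [zpow_add₀ (by norm_num), zpow_neg, zpow_natCast, zpow_one, mul_comm]

section Chi
variable {χ : ℝ → ℝ} (hχ : ChiOK χ)
include hχ

lemma aLP_abs (n : ℕ) (ξ : ℝ × ℝ) : aLP χ n ξ ^ 2 ≤ 1 := by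
  unfold aLP
  split_ifs
  · have := hχ.2.2.2 (en ξ)
    nlinarith [this.1, this.2]
  · have h1 := hχ.2.2.2 ((2 : ℝ) ^ (-(n : ℤ)) * en ξ)
    have h2 := hχ.2.2.2 ((2 : ℝ) ^ (-(n : ℤ) + 1) * en ξ)
    have := h1.1
    have := h1.2
    have := h2.1
    have := h2.2
    rw [sq_le_one_iff_abs_le_one, abs_le]
    constructor <;> linarith

lemma aLP_supp_zero (ξ : ℝ × ℝ) (h : aLP χ 0 ξ ≠ 0) : en ξ < 2 := by
  by_contra hc
  apply h
  simp only [aLP, if_true]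
  exact hχ.2.2.1 _ (not_lt.1 hc)

lemma aLP_supp (n : ℕ) (hn : n ≠ 0) (ξ : ℝ × ℝ) (h : aLP χ n ξ ≠ 0) :
    (2 : ℝ) ^ n < 2 * en ξ ∧ en ξ < 2 * (2 : ℝ) ^ n := by
  have h2 : (0 : ℝ) < 2 ^ n := by positivity
  have he := en_nonneg ξ
  simp only [aLP, if_neg hn, two_zpow_neg, two_zpow_neg'] at h
  constructor
  · by_contra hc
    rw [not_lt] at hc
    apply h
    rw [hχ.2.1, hχ.2.1, sub_self]
    · rw [mul_assoc, mul_comm, mul_assoc, inv_mul_le_iff₀ h2]; linarith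
    · rw [inv_mul_le_iff₀ h2]; linarith
  · by_contra hc
    rw [not_lt] at hc
    apply h
    have : 2 ≤ (2 ^ n : ℝ)⁻¹ * en ξ := by
      rw [le_inv_mul_iff₀ h2]; linarith
    rw [hχ.2.2.1 _ this, hχ.2.2.1, sub_self]
    rw [mul_assoc]; linarith

lemma aLP_zero_pt (n : ℕ) (hn : n ≠ 0) : aLP χ n 0 = 0 := by
  by_contra h
  have := (aLP_supp hχ n hn 0 h).1
  simp [en] at this
  have h2 : (0 : ℝ) < 2 ^ n := by positivity
  linarith

/-- nonzero indices are within distance one -/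
lemma aLP_near (n m : ℕ) (ξ : ℝ × ℝ) (hn : aLP χ n ξ ≠ 0) (hm : aLP χ m ξ ≠ 0) : m ≤ n + 1 := by
  rcases Nat.eq_zero_or_pos m with rfl | hm0
  · omega
  have h1 := (aLP_supp hχ m hm0.ne' ξ hm).1
  have h2 : en ξ < 2 * 2 ^ n := by
    rcases Nat.eq_zero_or_pos n with rfl | hn0
    · simpa using aLP_supp_zero hχ ξ hn
    · exact (aLP_supp hχ n hn0.ne' ξ hn).2
  have h3 : (2 : ℝ) ^ m < 2 ^ (n + 2) := by rw [pow_add]; linarith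
  have := (pow_lt_pow_iff_right₀ (by norm_num : (1 : ℝ) < 2)).1 h3
  omega

lemma tsum_le_two (ξ : ℝ × ℝ) (f : ℕ → ℝ≥0∞) (B : ℝ≥0∞)
    (h0 : ∀ n, aLP χ n ξ = 0 → f n = 0) (hB : ∀ n, f n ≤ B) : ∑' n, f n ≤ 2 * B := by
  classical
  by_cases hex : ∃ n, aLP χ n ξ ≠ 0
  · set N := Nat.find hex with hN
    have hNs : aLP χ N ξ ≠ 0 := Nat.find_spec hex
    have : ∑' n, f n = ∑ n ∈ ({N, N + 1} : Finset ℕ), f n := by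
      apply tsum_eq_sum
      intro n hn
      apply h0
      by_contra hne
      have h1 : N ≤ n := Nat.find_min' hex hne
      have h2 := aLP_near hχ N n ξ hNs hne
      simp only [Finset.mem_insert, Finset.mem_singleton] at hn
      omega
    rw [this, Finset.sum_pair (by omega), two_mul]
    exact add_le_add (hB _) (hB _)
  · push Not at hex
    have : ∀ n, f n = 0 := fun n => h0 n (hex n)
    simp [this]

lemma exists_half (ξ : ℝ × ℝ) : ∃ n, 1 / 2 ≤ aLP χ n ξ := by
  classical
  have hex : ∃ K : ℕ, en ξ ≤ 2 ^ K := by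
    obtain ⟨K, hK⟩ := pow_unbounded_of_one_lt (en ξ) (by norm_num : (1 : ℝ) < 2)
    exact ⟨K, hK.le⟩
  have hs := Nat.find_spec hex
  have hmin := fun m => Nat.find_min hex (m := m)
  generalize Nat.find hex = K at hs hmin
  have he := en_nonneg ξ
  match K, hs, hmin with
  | 0, hs, _ =>
    refine ⟨0, ?_⟩
    simp only [aLP, if_true]
    rw [hχ.2.1 _ (by simpa using hs)]; norm_num
  | 1, hs, _ =>
    have e0 : aLP χ 0 ξ = χ (en ξ) := by simp [aLP]
    have e1 : aLP χ 1 ξ = 1 - χ (en ξ) := by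
      simp only [aLP, if_neg one_ne_zero, two_zpow_neg, two_zpow_neg']
      rw [hχ.2.1 ((2 ^ 1)⁻¹ * en ξ)]
      · norm_num
      · norm_num at hs ⊢; linarith
    by_contra hc
    push Not at hc
    have h0 := hc 0
    have h1 := hc 1
    linarith
  | K + 2, hs, hmin =>
    have hm := hmin (K + 1) (by omega)
    rw [not_le] at hm
    have h2 : (0 : ℝ) < 2 ^ K := by positivity
    have e1 : aLP χ (K + 2) ξ = 1 - χ ((2 ^ (K + 1))⁻¹ * en ξ) := by
      simp only [aLP, if_neg (Nat.succ_ne_zero (K + 1)), two_zpow_neg, two_zpow_neg']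
      rw [hχ.2.1 ((2 ^ (K + 2))⁻¹ * en ξ)]
      · congr 2
        field_simp
        ring
      · rw [inv_mul_le_iff₀ (by positivity)]; linarith
    have e2 : aLP χ (K + 1) ξ = χ ((2 ^ (K + 1))⁻¹ * en ξ) := by
      simp only [aLP, if_neg (Nat.succ_ne_zero K), two_zpow_neg, two_zpow_neg']
      rw [hχ.2.2.1 (2 * (2 ^ (K + 1))⁻¹ * en ξ), sub_zero]
      rw [mul_assoc]
      have : 1 ≤ (2 ^ (K + 1) : ℝ)⁻¹ * en ξ := by
        rw [le_inv_mul_iff₀ (by positivity)]; linarith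
      linarith
    by_contra hc
    push Not at hc
    have h0 := hc (K + 1)
    have h1 := hc (K + 2)
    linarith

lemma two_pow_le (n : ℕ) (ξ : ℝ × ℝ) (h : aLP χ n ξ ≠ 0) :
    (2 : ℝ) ^ (2 * (n : ℝ)) ≤ 4 * (1 + en ξ ^ 2) := by
  have he := en_nonneg ξ
  have : (2 : ℝ) ^ (2 * (n : ℝ)) = ((2 : ℝ) ^ n) ^ 2 := by
    rw [mul_comm, Real.rpow_mul (by norm_num), Real.rpow_natCast]; norm_num
  rw [this]
  rcases Nat.eq_zero_or_pos n with rfl | hn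
  · simp; nlinarith
  · have h1 := (aLP_supp hχ n hn.ne' ξ h).1
    have : (0 : ℝ) < 2 ^ n := by positivity
    nlinarith

omit hχ in
lemma Tw_le (Θ : Polarization) (p q : ℝ) (hqp : q ≤ p) (n : ℕ) (ξ : ℝ × ℝ) :
    Tw χ Θ p q n ξ ≤ (2 : ℝ) ^ (2 * p * (n : ℝ)) * aLP χ n ξ ^ 2 := by
  obtain ⟨c0, c1⟩ := cLP_mem Θ n ξ
  have h : (2 : ℝ) ^ (2 * q * (n : ℝ)) ≤ (2 : ℝ) ^ (2 * p * (n : ℝ)) :=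
    Real.rpow_le_rpow_of_exponent_le (by norm_num) (by gcongr)
  have hp : (0 : ℝ) < (2 : ℝ) ^ (2 * p * (n : ℝ)) := by positivity
  calc Tw χ Θ p q n ξ ≤ (2 : ℝ) ^ (2 * p * (n : ℝ)) * (cLP Θ n ξ * aLP χ n ξ) ^ 2 +
        (2 : ℝ) ^ (2 * p * (n : ℝ)) * ((1 - cLP Θ n ξ) * aLP χ n ξ) ^ 2 := by
        unfold Tw; gcongr
    _ = (2 : ℝ) ^ (2 * p * (n : ℝ)) * ((cLP Θ n ξ ^ 2 + (1 - cLP Θ n ξ) ^ 2) * aLP χ n ξ ^ 2) := by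
        ring
    _ ≤ (2 : ℝ) ^ (2 * p * (n : ℝ)) * (1 * aLP χ n ξ ^ 2) := by
        gcongr
        nlinarith
    _ = _ := by ring

omit hχ in
lemma Tw_ge (Θ : Polarization) (p q : ℝ) (hqp : q ≤ p) (n : ℕ) (ξ : ℝ × ℝ) :
    (2 : ℝ) ^ (2 * q * (n : ℝ)) * aLP χ n ξ ^ 2 ≤ 2 * Tw χ Θ p q n ξ := by
  have h : (2 : ℝ) ^ (2 * q * (n : ℝ)) ≤ (2 : ℝ) ^ (2 * p * (n : ℝ)) :=
    Real.rpow_le_rpow_of_exponent_le (by norm_num) (by gcongr)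
  calc (2 : ℝ) ^ (2 * q * (n : ℝ)) * aLP χ n ξ ^ 2 ≤
      (2 : ℝ) ^ (2 * q * (n : ℝ)) *
        ((2 * (cLP Θ n ξ ^ 2 + (1 - cLP Θ n ξ) ^ 2)) * aLP χ n ξ ^ 2) := by
        gcongr
        refine le_mul_of_one_le_left (sq_nonneg _) ?_
        nlinarith [sq_nonneg (2 * cLP Θ n ξ - 1)]
    _ = 2 * ((2 : ℝ) ^ (2 * q * (n : ℝ)) * (cLP Θ n ξ * aLP χ n ξ) ^ 2 +
        (2 : ℝ) ^ (2 * q * (n : ℝ)) * ((1 - cLP Θ n ξ) * aLP χ n ξ) ^ 2) := by ring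
    _ ≤ _ := by unfold Tw; gcongr

omit hχ in
lemma Tw_zero (Θ : Polarization) (p q : ℝ) (n : ℕ) (ξ : ℝ × ℝ) (h : aLP χ n ξ = 0) :
    Tw χ Θ p q n ξ = 0 := by simp [Tw, h]

lemma Jw_le (Θ : Polarization) (p q : ℝ) (hp : 0 ≤ p) (hqp : q ≤ p) (ξ : ℝ × ℝ) :
    Jw χ Θ p q ξ ≤ ((2 * (4 : ℝ) ^ p).toNNReal : ℝ≥0∞) *
      ENNReal.ofReal ((1 + en ξ ^ 2) ^ p) := by
  have : Jw χ Θ p q ξ ≤ 2 * ENNReal.ofReal ((4 * (1 + en ξ ^ 2)) ^ p) := by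
    apply tsum_le_two hχ ξ
    · intro n h; simp [Tw_zero Θ p q n ξ h]
    · intro n
      apply ENNReal.ofReal_le_ofReal
      by_cases h : aLP χ n ξ = 0
      · rw [Tw_zero Θ p q n ξ h]; positivity
      refine (Tw_le (χ := χ) Θ p q hqp n ξ).trans ?_
      have e : (2 : ℝ) ^ (2 * p * (n : ℝ)) = ((2 : ℝ) ^ (2 * (n : ℝ))) ^ p := by
        rw [← Real.rpow_mul (by norm_num)]; ring_nf
      rw [e]
      calc ((2 : ℝ) ^ (2 * (n : ℝ))) ^ p * aLP χ n ξ ^ 2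
          ≤ (4 * (1 + en ξ ^ 2)) ^ p * 1 := by
            gcongr
            · exact two_pow_le hχ n ξ h
            · exact aLP_abs hχ n ξ
        _ = _ := mul_one _
  refine this.trans (le_of_eq ?_)
  rw [Real.mul_rpow (by norm_num) (by positivity), ENNReal.ofReal_mul (by positivity), ← mul_assoc]
  congr 1
  rw [← ENNReal.ofReal, ENNReal.ofReal_mul (by norm_num)]
  simp

lemma Jw_ge (Θ : Polarization) (p q : ℝ) (hq : q ≤ 0) (hqp : q ≤ p) (ξ : ℝ × ℝ) :
    ENNReal.ofReal ((1 + en ξ ^ 2) ^ q) ≤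
      ((8 * (4 : ℝ) ^ (-q)).toNNReal : ℝ≥0∞) * Jw χ Θ p q ξ := by
  obtain ⟨n, hn⟩ := exists_half hχ ξ
  have hT : ENNReal.ofReal (Tw χ Θ p q n ξ) ≤ Jw χ Θ p q ξ :=
    ENNReal.le_tsum (f := fun n => ENNReal.ofReal (Tw χ Θ p q n ξ)) n
  refine le_trans ?_ (mul_le_mul_right hT _)
  rw [← ENNReal.ofReal, ← ENNReal.ofReal_mul (by positivity)]
  apply ENNReal.ofReal_le_ofReal
  have h1 := Tw_ge (χ := χ) Θ p q hqp n ξ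
  have h2 := two_pow_le hχ n ξ (by linarith)
  have e : (2 : ℝ) ^ (2 * q * (n : ℝ)) = ((2 : ℝ) ^ (2 * (n : ℝ))) ^ q := by
    rw [← Real.rpow_mul (by norm_num)]; ring_nf
  have h3 : (4 * (1 + en ξ ^ 2)) ^ q ≤ (2 : ℝ) ^ (2 * q * (n : ℝ)) := by
    rw [e]
    exact Real.rpow_le_rpow_of_nonpos (by positivity) h2 hq
  rw [Real.mul_rpow (by norm_num) (by positivity)] at h3
  have h4 : (4 : ℝ) ^ q * (1 + en ξ ^ 2) ^ q * (1 / 4) ≤ 2 * Tw χ Θ p q n ξ := by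
    refine le_trans ?_ h1
    gcongr
    nlinarith
  have h5 : (4 : ℝ) ^ (-q) * 4 ^ q = 1 := by
    rw [← Real.rpow_add (by norm_num)]; simp
  have h6 : (0 : ℝ) < 4 ^ (-q) := by positivity
  calc (1 + en ξ ^ 2) ^ q = ((4 : ℝ) ^ (-q) * 4 ^ q) * (1 + en ξ ^ 2) ^ q := by rw [h5, one_mul]
    _ = 4 * (4 : ℝ) ^ (-q) * ((4 : ℝ) ^ q * (1 + en ξ ^ 2) ^ q * (1 / 4)) := by ring
    _ ≤ 4 * (4 : ℝ) ^ (-q) * (2 * Tw χ Θ p q n ξ) := by gcongr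
    _ = _ := by ring

lemma Jw_pol (Θ Θ' : Polarization) (hΘ : PolLt Θ' Θ) (p q : ℝ) (hqp : q ≤ p) (ξ : ℝ × ℝ) :
    Jw χ Θ' p q ξ ≤ ((2 : ℝ≥0) : ℝ≥0∞) * Jw χ Θ p q ξ := by
  unfold Jw
  rw [← ENNReal.tsum_mul_left]
  apply ENNReal.tsum_le_tsum
  intro n
  have e2 : ((2 : ℝ≥0) : ℝ≥0∞) = ENNReal.ofReal 2 := by simp
  rw [e2, ← ENNReal.ofReal_mul (by norm_num)]
  apply ENNReal.ofReal_le_ofReal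
  have hnn := Tw_nonneg χ Θ p q n ξ
  rcases Nat.eq_zero_or_pos n with rfl | hn
  · have : Tw χ Θ' p q 0 ξ = Tw χ Θ p q 0 ξ := by simp [Tw, cLP]
    linarith
  by_cases h0 : ξ = 0
  · rw [Tw_zero Θ' p q n ξ (by rw [h0]; exact aLP_zero_pt hχ n hn.ne')]
    linarith
  by_cases hC : ξ ∈ Θ.Cp
  · have h1 := Tw_le (χ := χ) Θ' p q hqp n ξ
    have : Tw χ Θ p q n ξ = (2 : ℝ) ^ (2 * p * (n : ℝ)) * aLP χ n ξ ^ 2 := by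
      simp [Tw, cLP, hn.ne', Θ.one_on_p ξ hC h0]
    linarith
  · have hm : ξ ∈ Θ'.Cm := by
      apply interior_subset
      apply hΘ
      exact ⟨subset_closure ⟨mem_univ _, hC⟩, h0⟩
    have h1 := Tw_ge (χ := χ) Θ p q hqp n ξ
    have : Tw χ Θ' p q n ξ = (2 : ℝ) ^ (2 * q * (n : ℝ)) * aLP χ n ξ ^ 2 := by
      simp [Tw, cLP, hn.ne', Θ'.zero_on_m ξ hm h0]
    linarith

lemma Jw_eps (Θ : Polarization) (p q ε : ℝ) (hε : 0 < ε) (M : ℕ) (ξ : ℝ × ℝ)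
    (hM : M = 0 ∨ (2 : ℝ) ^ M ≤ en ξ) :
    Jw χ Θ (p - ε) (q - ε) ξ ≤ ENNReal.ofReal ((2 : ℝ) ^ (-(2 * ε * M))) * Jw χ Θ p q ξ := by
  unfold Jw
  rw [← ENNReal.tsum_mul_left]
  apply ENNReal.tsum_le_tsum
  intro n
  rw [← ENNReal.ofReal_mul (by positivity)]
  apply ENNReal.ofReal_le_ofReal
  by_cases h : aLP χ n ξ = 0
  · simp [Tw_zero Θ _ _ n ξ h]
  have hMn : M ≤ n := by
    rcases hM with rfl | hM
    · omega
    rcases Nat.eq_zero_or_pos n with rfl | hn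
    · have h1 := aLP_supp_zero hχ ξ h
      have h3 : (2 : ℝ) ^ M < 2 ^ 1 := by linarith
      have := (pow_lt_pow_iff_right₀ (by norm_num : (1 : ℝ) < 2)).1 h3
      omega
    · have h1 := (aLP_supp hχ n hn.ne' ξ h).2
      have h3 : (2 : ℝ) ^ M < 2 ^ (n + 1) := by rw [pow_succ]; linarith
      have := (pow_lt_pow_iff_right₀ (by norm_num : (1 : ℝ) < 2)).1 h3
      omega
  have e : Tw χ Θ (p - ε) (q - ε) n ξ = (2 : ℝ) ^ (-(2 * ε * n)) * Tw χ Θ p q n ξ := by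
    have e1 : ∀ s : ℝ, (2 : ℝ) ^ (2 * (s - ε) * n) = (2 : ℝ) ^ (-(2 * ε * n)) * 2 ^ (2 * s * n) := by
      intro s
      rw [← Real.rpow_add (by norm_num)]; ring_nf
    simp only [Tw, e1]; ring
  rw [e]
  have := Tw_nonneg χ Θ p q n ξ
  gcongr
  norm_num

end Chi

/-! ### Norms as weighted integrals -/

lemma eLpNorm_sq (f : ℝ × ℝ → ℂ) : eLpNorm f 2 volume ^ 2 = ∫⁻ x, ‖f x‖ₑ ^ 2 := by
  have := eLpNorm_nnreal_pow_eq_lintegral (f := f) (μ := volume) (p := 2) (by norm_num)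
  simpa using this

lemma rpow_half_sq (x : ℝ≥0∞) : (x ^ (1 / 2 : ℝ)) ^ 2 = x := by
  rw [← ENNReal.rpow_natCast, ← ENNReal.rpow_mul]; norm_num

lemma enorm_ofReal_mul_sq (r : ℝ) (z : ℂ) : ‖(r : ℂ) * z‖ₑ ^ 2 = ENNReal.ofReal (r ^ 2) * ‖z‖ₑ ^ 2 := by
  rw [enorm_mul, mul_pow]
  congr 1
  rw [← sq_abs, ENNReal.ofReal_pow (abs_nonneg r), ← Real.norm_eq_abs, ofReal_norm]
  congr 1
  simp [enorm]

lemma psi_measurable {χ : ℝ → ℝ} (hχ : ChiOK χ) (Θ : Polarization) (n : ℕ) (σ : Bool) :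
    Measurable (psiLP χ Θ n σ) := by
  have hc : Continuous χ := hχ.1.continuous
  have he := en_continuous
  have hp : Measurable Θ.phip :=
    measurable_of_continuousOn_compl_singleton 0 Θ.smooth_p.continuousOn
  have hm : Measurable Θ.phim :=
    measurable_of_continuousOn_compl_singleton 0 Θ.smooth_m.continuousOn
  unfold psiLP
  by_cases hn : n = 0
  · simp only [hn, if_true]
    exact (by fun_prop : Continuous fun ξ => χ (en ξ) / 2).measurable
  · simp only [hn, if_false]
    have h2 : Measurable fun ξ : ℝ × ℝ =>
      (χ ((2 : ℝ) ^ (-(n : ℤ)) * en ξ) - χ ((2 : ℝ) ^ (-(n : ℤ) + 1) * en ξ)) :=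
      Continuous.measurable (by fun_prop)
    cases σ
    · simpa using hm.fun_mul h2
    · simpa using hp.fun_mul h2

lemma wnorm_sq (s : ℝ) (u : ℝ × ℝ → ℂ) :
    wnorm s u ^ 2 = ∫⁻ ξ, ENNReal.ofReal ((1 + en ξ ^ 2) ^ s) * ‖FT u ξ‖ₑ ^ 2 := by
  rw [wnorm, eLpNorm_sq]
  congr 1
  ext ξ
  rw [enorm_ofReal_mul_sq, ← Real.rpow_natCast, ← Real.rpow_mul (by positivity)]
  norm_num

lemma segNorm_sq {χ : ℝ → ℝ} (hχ : ChiOK χ) (Θ : Polarization) (p : ℝ) (σ : Bool)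
    (u : ℝ × ℝ → ℂ) (hu : Continuous (FT u)) :
    segNorm χ Θ p σ u ^ 2 = ∫⁻ ξ, (∑' n : ℕ, ENNReal.ofReal ((2 : ℝ) ^ (2 * p * (n : ℝ)) *
      psiLP χ Θ n σ ξ ^ 2)) * ‖FT u ξ‖ₑ ^ 2 := by
  have hF : Measurable (FT u) := hu.measurable
  rw [segNorm, rpow_half_sq]
  simp_rw [eLpNorm_sq, ← ENNReal.tsum_mul_right]
  rw [lintegral_tsum]
  · congr 1
    ext n
    have := psi_measurable hχ Θ n σ
    rw [← lintegral_const_mul]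
    · congr 1
      ext ξ
      rw [enorm_ofReal_mul_sq, ENNReal.ofReal_mul (by positivity), ← mul_assoc]
    · fun_prop
  · intro n
    have := psi_measurable hχ Θ n σ
    fun_prop

lemma anorm_sq {χ : ℝ → ℝ} (hχ : ChiOK χ) (Θ : Polarization) (p q : ℝ)
    (u : ℝ × ℝ → ℂ) (hu : Continuous (FT u)) :
    anorm χ Θ p q u ^ 2 = ∫⁻ ξ, Jw χ Θ p q ξ * ‖FT u ξ‖ₑ ^ 2 := by
  have hF : Measurable (FT u) := hu.measurable
  rw [anorm, rpow_half_sq, segNorm_sq hχ Θ p _ u hu, segNorm_sq hχ Θ q _ u hu,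
    ← lintegral_add_left]
  · congr 1
    ext ξ
    rw [← add_mul, ← ENNReal.tsum_add]
    congr 1
    unfold Jw
    congr 1
    ext n
    rw [← ENNReal.ofReal_add (by positivity) (by positivity), psi_true, psi_false]
    rfl
  · refine Measurable.mul (Measurable.tsum fun n => ?_) (by fun_prop)
    have := psi_measurable hχ Θ n true
    fun_prop

lemma sq_le_conv {A B : ℝ≥0∞} (K : ℝ≥0) (h : A ^ 2 ≤ K * B ^ 2) : A ≤ (NNReal.sqrt K : ℝ≥0) * B := by
  have : A ^ 2 ≤ ((NNReal.sqrt K : ℝ≥0) * B) ^ 2 := by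
    rw [mul_pow, ← ENNReal.coe_pow, NNReal.sq_sqrt]; exact h
  exact (ENNReal.pow_le_pow_left_iff (by norm_num)).1 this

lemma weight_le {A B : ℝ≥0∞} (K : ℝ≥0) (w1 w2 g : ℝ × ℝ → ℝ≥0∞)
    (hA : A ^ 2 = ∫⁻ ξ, w1 ξ * g ξ) (hB : B ^ 2 = ∫⁻ ξ, w2 ξ * g ξ)
    (hw : ∀ ξ, w1 ξ ≤ K * w2 ξ) : A ≤ (NNReal.sqrt K : ℝ≥0) * B := by
  apply sq_le_conv
  rw [hA, hB, ← lintegral_const_mul' _ _ (by simp)]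
  apply lintegral_mono
  intro ξ
  simp only
  rw [← mul_assoc]
  gcongr
  exact hw ξ

lemma cpt_supp {η δ : ℝ} {u : ℝ × ℝ → ℂ} (h : Function.support u ⊆ Rset η δ) :
    HasCompactSupport u := by
  apply HasCompactSupport.intro (K := Set.Icc (-η) η ×ˢ Set.Icc δ (2 * δ))
  · exact isCompact_Icc.prod isCompact_Icc
  · intro x hx
    by_contra hne
    apply hx
    have := h hne
    exact ⟨⟨this.1.1.le, this.1.2.le⟩, ⟨this.2.1.le, this.2.2.le⟩⟩

lemma planch_c (u : ℝ × ℝ → ℂ) (hc : Continuous u) (hs : HasCompactSupport u) :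
    ∫⁻ ξ, ‖FT u ξ‖ₑ ^ 2 = ∫⁻ x, ‖u x‖ₑ ^ 2 := by
  rw [← eLpNorm_sq, ← eLpNorm_sq, planch u (hc.integrable_of_hasCompactSupport hs)
    (hc.memLp_of_hasCompactSupport hs)]

/-! ### Derivatives -/

/-- the dot product -/
def dotL : (ℝ × ℝ) →L[ℝ] (ℝ × ℝ) →L[ℝ] ℝ :=
  (ContinuousLinearMap.mul ℝ ℝ).bilinearComp (ContinuousLinearMap.fst ℝ ℝ ℝ)
    (ContinuousLinearMap.fst ℝ ℝ ℝ) +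
  (ContinuousLinearMap.mul ℝ ℝ).bilinearComp (ContinuousLinearMap.snd ℝ ℝ ℝ)
    (ContinuousLinearMap.snd ℝ ℝ ℝ)

lemma dotL_apply (v w : ℝ × ℝ) : dotL v w = v.1 * w.1 + v.2 * w.2 := by
  simp [dotL]

lemma FT_eq_vec (u : ℝ × ℝ → ℂ) (ξ : ℝ × ℝ) :
    FT u ξ = VectorFourier.fourierIntegral Real.fourierChar volume dotL.toLinearMap₁₂ u ξ := by
  rw [FT, VectorFourier.fourierIntegral]
  congr 1
  ext x
  rw [Circle.smul_def, Real.fourierChar_apply, smul_eq_mul]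
  congr 2
  simp [dotL_apply]
  ring

lemma FT_deriv (u : ℝ × ℝ → ℂ) (hu : ContDiff ℝ 1 u) (hs : HasCompactSupport u) (e ξ : ℝ × ℝ) :
    FT (fun x => fderiv ℝ u x e) ξ =
      (2 * Real.pi * Complex.I * (e.1 * ξ.1 + e.2 * ξ.2)) * FT u ξ := by
  have hi : Integrable u := hu.continuous.integrable_of_hasCompactSupport hs
  have hd : Integrable (fderiv ℝ u) :=
    (hu.continuous_fderiv (by norm_num)).integrable_of_hasCompactSupport (hs.fderiv ℝ)
  have h := VectorFourier.fourierIntegral_fderiv dotL hi (hu.differentiable (by norm_num)) hd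
  have h2 := congrArg (fun F => F ξ e) h
  rw [Real.fourierIntegral_continuousLinearMap_apply' hd] at h2
  rw [FT_eq_vec, h2, VectorFourier.fourierSMulRight_apply, ← FT_eq_vec]
  simp [dotL_apply]
  ring

lemma Rset_meas (η δ : ℝ) : MeasurableSet (Rset η δ) :=
  measurableSet_Ioo.prod measurableSet_Ioo

lemma Rset_vol (η δ : ℝ) : volume (Rset η δ) < ∞ := by
  have : IsCompact (Set.Icc (-η) η ×ˢ Set.Icc δ (2 * δ)) := isCompact_Icc.prod isCompact_Icc
  exact lt_of_le_of_lt (measure_mono (Set.prod_mono Ioo_subset_Icc_self Ioo_subset_Icc_self))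
    this.measure_lt_top

lemma l2_le_sup {η δ : ℝ} (f : ℝ × ℝ → ℂ) (S : ℝ) (hf : ∀ x, x ∉ Rset η δ → f x = 0)
    (hS : ∀ x, ‖f x‖ ≤ S) :
    ∫⁻ x, ‖f x‖ₑ ^ 2 ≤ volume (Rset η δ) * ENNReal.ofReal S ^ 2 := by
  calc ∫⁻ x, ‖f x‖ₑ ^ 2 ≤ ∫⁻ x, (Rset η δ).indicator (fun _ => ENNReal.ofReal S ^ 2) x := by
        apply lintegral_mono
        intro x
        by_cases hx : x ∈ Rset η δ
        · simp only [Set.indicator_of_mem hx]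
          gcongr
          rw [← ofReal_norm]
          exact ENNReal.ofReal_le_ofReal (hS x)
        · simp [hf x hx]
    _ = _ := by rw [lintegral_indicator (Rset_meas η δ), setLIntegral_const, mul_comm]

lemma part_a1 (η δ : ℝ) (u : ℝ × ℝ → ℂ) (hu : ContDiff ℝ 1 u)
    (hR : Function.support u ⊆ Rset η δ) :
    wnorm 1 u ≤ (NNReal.sqrt (3 * (volume (Rset η δ)).toNNReal) : ℝ≥0) *
      ENNReal.ofReal (⨆ x : ℝ × ℝ, (‖u x‖ + ‖fderiv ℝ u x‖)) := by
  apply sq_le_conv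
  have hs := cpt_supp hR
  have hc := hu.continuous
  have hc' : Continuous (fderiv ℝ u) := hu.continuous_fderiv (by norm_num)
  have hs' : HasCompactSupport (fderiv ℝ u) := hs.fderiv ℝ
  set S := ⨆ x : ℝ × ℝ, (‖u x‖ + ‖fderiv ℝ u x‖) with hS
  have hbdd : BddAbove (Set.range fun x : ℝ × ℝ => (‖u x‖ + ‖fderiv ℝ u x‖)) := by
    apply Continuous.bddAbove_range_of_hasCompactSupport (by fun_prop)
    exact hs.norm.add hs'.norm
  have hle : ∀ x, ‖u x‖ + ‖fderiv ℝ u x‖ ≤ S := fun x => le_ciSup hbdd x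
  have hFc : Continuous (FT u) := FT_continuous u (hc.integrable_of_hasCompactSupport hs)
  have hFm := hFc.measurable
  -- derivative vanishes off R
  have hd0 : ∀ x, x ∉ Rset η δ → fderiv ℝ u x = 0 := by
    intro x hx
    by_cases hxe : x ∈ tsupport u
    · -- `u x = 0` and the derivative is a limit of vanishing derivatives
      by_contra hne
      have hopen : IsOpen {y | fderiv ℝ u y ≠ 0} := isOpen_ne_fun hc' continuous_const
      have hsub : {y | fderiv ℝ u y ≠ 0} ∩ (closure (Rset η δ))ᶜ = ∅ := by
        ext y
        simp only [mem_inter_iff, mem_ofPred_eq, mem_compl_iff, mem_empty_iff_false, iff_false,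
          not_and, not_not]
        intro hy
        have h1 : y ∈ tsupport u := support_fderiv_subset ℝ hy
        exact closure_mono hR h1
      have hsub2 : {y | fderiv ℝ u y ≠ 0} ⊆ interior (closure (Rset η δ)) := by
        apply interior_maximal _ hopen
        intro y hy
        by_contra hcy
        have : y ∈ ({y | fderiv ℝ u y ≠ 0} ∩ (closure (Rset η δ))ᶜ) := ⟨hy, hcy⟩
        rw [hsub] at this
        exact this
      have hmem := hsub2 hne
      rw [Rset, closure_prod_eq, interior_prod_eq] at hmem
      apply hx
      by_cases hη : -η = η
      · simp [hη] at hmem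
      by_cases hδ : δ = 2 * δ
      · have : δ = 0 := by linarith
        simp [this] at hmem
      rw [closure_Ioo hη, closure_Ioo hδ, interior_Icc, interior_Icc] at hmem
      exact hmem
    · by_contra hne
      exact hxe (support_fderiv_subset ℝ hne)
  have b0 : ∫⁻ ξ, ‖FT u ξ‖ₑ ^ 2 ≤ volume (Rset η δ) * ENNReal.ofReal S ^ 2 := by
    rw [planch_c u hc hs]
    apply l2_le_sup
    · intro x hx
      by_contra hne
      exact hx (hR hne)
    · intro x
      exact le_trans (by linarith [norm_nonneg (fderiv ℝ u x)]) (hle x)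
  have b1 : ∀ e : ℝ × ℝ, ‖e‖ ≤ 1 → ∫⁻ ξ, ENNReal.ofReal ((e.1 * ξ.1 + e.2 * ξ.2) ^ 2) *
      ‖FT u ξ‖ₑ ^ 2 ≤ volume (Rset η δ) * ENNReal.ofReal S ^ 2 := by
    intro e he
    calc _ ≤ ∫⁻ ξ, ‖FT (fun x => fderiv ℝ u x e) ξ‖ₑ ^ 2 := by
          apply lintegral_mono
          intro ξ
          simp only
          rw [FT_deriv u hu hs, enorm_mul, mul_pow]
          gcongr
          rw [← ofReal_norm, ← ENNReal.ofReal_pow (norm_nonneg _)]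
          apply ENNReal.ofReal_le_ofReal
          have : ‖(2 * (Real.pi : ℂ) * Complex.I * (e.1 * ξ.1 + e.2 * ξ.2) : ℂ)‖ =
              2 * Real.pi * |e.1 * ξ.1 + e.2 * ξ.2| := by
            have h3 : ((e.1 : ℂ) * ξ.1 + e.2 * ξ.2) = ((e.1 * ξ.1 + e.2 * ξ.2 : ℝ) : ℂ) := by
              push_cast; ring
            rw [h3, norm_mul, Complex.norm_real, Real.norm_eq_abs]
            simp [abs_of_pos Real.pi_pos]
          rw [this, mul_pow, sq_abs]
          have hpi := Real.pi_gt_three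
          exact le_mul_of_one_le_left (sq_nonneg _) (by nlinarith)
      _ = ∫⁻ x, ‖fderiv ℝ u x e‖ₑ ^ 2 := by
          apply planch_c
          · fun_prop
          · exact hs'.comp_left (g := fun L : (ℝ × ℝ) →L[ℝ] ℂ => L e) (by simp)
      _ ≤ _ := by
          apply l2_le_sup
          · intro x hx
            rw [hd0 x hx]; simp
          · intro x
            have h4 := (fderiv ℝ u x).le_opNorm e
            have h5 := hle x
            have := norm_nonneg (u x)
            have := norm_nonneg (fderiv ℝ u x)
            nlinarith
  rw [wnorm_sq]
  have e0 : ∀ ξ : ℝ × ℝ, ENNReal.ofReal ((1 + en ξ ^ 2) ^ (1 : ℝ)) * ‖FT u ξ‖ₑ ^ 2 =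
      ‖FT u ξ‖ₑ ^ 2 + (
      ENNReal.ofReal ((((1, 0) : ℝ × ℝ).1 * ξ.1 + ((1, 0) : ℝ × ℝ).2 * ξ.2) ^ 2) * ‖FT u ξ‖ₑ ^ 2 +
      ENNReal.ofReal ((((0, 1) : ℝ × ℝ).1 * ξ.1 + ((0, 1) : ℝ × ℝ).2 * ξ.2) ^ 2) * ‖FT u ξ‖ₑ ^ 2) := by
    intro ξ
    rw [Real.rpow_one, en_sq, ENNReal.ofReal_add (by norm_num) (by positivity),
      ENNReal.ofReal_add (by positivity) (by positivity)]
    simp [add_mul]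
  simp_rw [e0]
  rw [lintegral_add_left (by fun_prop), lintegral_add_left (by fun_prop)]
  have c1 := b1 (1, 0) (by simp)
  have c2 := b1 (0, 1) (by simp)
  refine (add_le_add b0 (add_le_add c1 c2)).trans (le_of_eq ?_)
  rw [ENNReal.coe_mul, ENNReal.coe_toNNReal (Rset_vol η δ).ne]
  push_cast
  ring

/-! ### Compactness -/

lemma norm_exp_sub_le (a b : ℝ) :
    ‖Complex.exp (a * Complex.I) - Complex.exp (b * Complex.I)‖ ≤ |a - b| := by
  have e : Complex.exp (a * Complex.I) - Complex.exp (b * Complex.I) =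
      Complex.exp (b * Complex.I) * (Complex.exp (Complex.I * ((a - b : ℝ) : ℂ)) - 1) := by
    rw [mul_sub, ← Complex.exp_add, mul_one]
    congr 2
    push_cast; ring
  rw [e, norm_mul, Complex.norm_exp_ofReal_mul_I, one_mul]
  exact Real.norm_exp_I_mul_ofReal_sub_one_le

lemma FT_integrable (u : ℝ × ℝ → ℂ) (hi : Integrable u) (ξ : ℝ × ℝ) :
    Integrable fun x : ℝ × ℝ =>
      Complex.exp (-(2 * Real.pi * (x.1 * ξ.1 + x.2 * ξ.2)) * Complex.I) * u x := by
  apply hi.bdd_mul (c := 1)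
  · exact Continuous.aestronglyMeasurable (by fun_prop)
  · filter_upwards with x
    have := Complex.norm_exp_ofReal_mul_I (-(2 * Real.pi * (x.1 * ξ.1 + x.2 * ξ.2)))
    push_cast at this
    exact this.le

lemma FT_bound (u : ℝ × ℝ → ℂ) (ξ : ℝ × ℝ) : ‖FT u ξ‖ ≤ ∫ x, ‖u x‖ := by
  rw [FT]
  refine (norm_integral_le_integral_norm _).trans (le_of_eq ?_)
  congr 1
  ext x
  have := Complex.norm_exp_ofReal_mul_I (-(2 * Real.pi * (x.1 * ξ.1 + x.2 * ξ.2)))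
  push_cast at this
  rw [norm_mul, this, one_mul]

lemma FT_sub (u v : ℝ × ℝ → ℂ) (hu : Integrable u) (hv : Integrable v) (ξ : ℝ × ℝ) :
    FT (u - v) ξ = FT u ξ - FT v ξ := by
  rw [FT, FT, FT, ← integral_sub (FT_integrable u hu ξ) (FT_integrable v hv ξ)]
  congr 1
  ext x
  simp [mul_sub]

lemma FT_lip {η δ : ℝ} (u : ℝ × ℝ → ℂ) (hi : Integrable u) (hR : Function.support u ⊆ Rset η δ)
    (hη : 0 < η) (hδ : 0 < δ) (ξ ζ : ℝ × ℝ) :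
    ‖FT u ξ - FT u ζ‖ ≤ (2 * Real.pi * (η + 2 * δ)) * ‖ξ - ζ‖ * ∫ x, ‖u x‖ := by
  rw [FT, FT, ← integral_sub (FT_integrable u hi ξ) (FT_integrable u hi ζ), ← integral_const_mul]
  apply norm_integral_le_of_norm_le (hi.norm.const_mul _)
  filter_upwards with x
  rw [← sub_mul, norm_mul]
  by_cases hx : x ∈ Rset η δ
  · gcongr
    have h := norm_exp_sub_le (-(2 * Real.pi * (x.1 * ξ.1 + x.2 * ξ.2)))
      (-(2 * Real.pi * (x.1 * ζ.1 + x.2 * ζ.2)))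
    push_cast at h
    refine h.trans ?_
    have e : -(2 * Real.pi * (x.1 * ξ.1 + x.2 * ξ.2)) - -(2 * Real.pi * (x.1 * ζ.1 + x.2 * ζ.2)) =
      (2 * Real.pi) * -(x.1 * (ξ - ζ).1 + x.2 * (ξ - ζ).2) := by
      simp; ring
    rw [e, abs_mul, abs_neg, abs_of_pos (by positivity), mul_assoc (2 * Real.pi) (η + 2 * δ)]
    gcongr
    have h1 : |(ξ - ζ).1| ≤ ‖ξ - ζ‖ := norm_fst_le (ξ - ζ)
    have h2 : |(ξ - ζ).2| ≤ ‖ξ - ζ‖ := norm_snd_le (ξ - ζ)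
    have h3 : |x.1| ≤ η := abs_le.2 ⟨hx.1.1.le, hx.1.2.le⟩
    have h4 : |x.2| ≤ 2 * δ := abs_le.2 ⟨by linarith [hx.2.1], hx.2.2.le⟩
    refine (abs_add_le (x.1 * (ξ - ζ).1) (x.2 * (ξ - ζ).2)).trans ?_
    rw [abs_mul, abs_mul, add_mul]
    gcongr
  · have : u x = 0 := by
      by_contra hne
      exact hx (hR hne)
    simp [this]

lemma subseq_cauchy (f : ℕ → ℝ × ℝ → ℂ) (B L : ℝ) (hB : ∀ k ξ, ‖f k ξ‖ ≤ B)
    (hL : ∀ k ξ ζ, ‖f k ξ - f k ζ‖ ≤ L * ‖ξ - ζ‖) :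
    ∃ φ : ℕ → ℕ, StrictMono φ ∧ ∀ ξ, CauchySeq fun k => f (φ k) ξ := by
  have hK : IsCompact (Set.pi Set.univ fun _ : ℕ => Metric.closedBall (0 : ℂ) B) :=
    isCompact_univ_pi fun _ => isCompact_closedBall _ _
  let d : ℕ → ℝ × ℝ := TopologicalSpace.denseSeq (ℝ × ℝ)
  obtain ⟨g, -, φ, hφ, hg⟩ := hK.tendsto_subseq (x := fun k => fun j => f k (d j)) (by
    intro k j _
    simpa using hB k (d j))
  refine ⟨φ, hφ, fun ξ => ?_⟩
  have hL0 : 0 < |L| + 1 := by positivity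
  rw [Metric.cauchySeq_iff]
  intro e he
  have hdense := TopologicalSpace.denseRange_denseSeq (ℝ × ℝ)
  obtain ⟨j, hj⟩ := hdense.exists_dist_lt ξ (ε := e / 4 / (|L| + 1)) (by positivity)
  rw [tendsto_pi_nhds] at hg
  have hc : CauchySeq fun k => f (φ k) (d j) := (hg j).cauchySeq
  rw [Metric.cauchySeq_iff] at hc
  obtain ⟨N, hN⟩ := hc (e / 2) (by positivity)
  refine ⟨N, fun m hm n hn => ?_⟩
  have h1 : ∀ k, dist (f k ξ) (f k (d j)) < e / 4 := by
    intro k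
    rw [dist_eq_norm]
    rw [lt_div_iff₀ hL0, dist_eq_norm] at hj
    have h2 := hL k ξ (d j)
    have h3 : L * ‖ξ - d j‖ ≤ ‖ξ - d j‖ * (|L| + 1) := by
      rw [mul_comm]
      gcongr
      linarith [le_abs_self L]
    exact lt_of_le_of_lt (h2.trans h3) hj
  have h2 := hN m hm n hn
  calc dist (f (φ m) ξ) (f (φ n) ξ)
      ≤ dist (f (φ m) ξ) (f (φ m) (d j)) + dist (f (φ m) (d j)) (f (φ n) (d j)) +
        dist (f (φ n) (d j)) (f (φ n) ξ) := dist_triangle4 _ _ _ _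
    _ < e / 4 + e / 2 + e / 4 := by
        have := h1 (φ m)
        have h3 := h1 (φ n)
        rw [dist_comm] at h3
        linarith
    _ = e := by ring

lemma l1_bound {η δ : ℝ} (u : ℝ × ℝ → ℂ) (hc : Continuous u) (hR : Function.support u ⊆ Rset η δ)
    (K : ℝ≥0) (h2 : ∫⁻ x, ‖u x‖ₑ ^ 2 ≤ K) :
    ∫ x, ‖u x‖ ≤ (volume (Rset η δ)).toReal + K := by
  rw [integral_norm_eq_lintegral_enorm hc.aestronglyMeasurable]
  have h : ∫⁻ x, ‖u x‖ₑ ≤ volume (Rset η δ) + K := by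
    calc ∫⁻ x, ‖u x‖ₑ ≤ ∫⁻ x, ((Rset η δ).indicator (fun _ => (1 : ℝ≥0∞)) x + ‖u x‖ₑ ^ 2) := by
          apply lintegral_mono
          intro x
          by_cases hx : x ∈ Rset η δ
          · simp only [Set.indicator_of_mem hx]
            rcases le_total (‖u x‖ₑ) 1 with h | h
            · exact h.trans le_self_add
            · exact le_trans (le_self_pow₀ h (by norm_num)) le_add_self
          · have : u x = 0 := by
              by_contra hne
              exact hx (hR hne)
            simp [this]
      _ = volume (Rset η δ) + ∫⁻ x, ‖u x‖ₑ ^ 2 := by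
          rw [lintegral_add_left (measurable_const.indicator (Rset_meas η δ)),
            lintegral_indicator (Rset_meas η δ), setLIntegral_const, one_mul]
      _ ≤ _ := by gcongr
  have hv := (Rset_vol η δ).ne
  refine (ENNReal.toReal_mono (by simp [hv]) h).trans (le_of_eq ?_)
  rw [ENNReal.toReal_add hv (by simp)]; simp

lemma enorm_sub_sq_le (a b : ℂ) : ‖a - b‖ₑ ^ 2 ≤ 2 * ‖a‖ₑ ^ 2 + 2 * ‖b‖ₑ ^ 2 := by
  have h : ‖a - b‖ ^ 2 ≤ 2 * ‖a‖ ^ 2 + 2 * ‖b‖ ^ 2 := by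
    have := norm_sub_le a b
    have := norm_nonneg (a - b)
    nlinarith [sq_nonneg (‖a‖ - ‖b‖)]
  have h2 := ENNReal.ofReal_le_ofReal h
  rw [ENNReal.ofReal_add (by positivity) (by positivity), ENNReal.ofReal_mul (by norm_num),
    ENNReal.ofReal_mul (by norm_num), ENNReal.ofReal_pow (norm_nonneg _),
    ENNReal.ofReal_pow (norm_nonneg _), ENNReal.ofReal_pow (norm_nonneg _)] at h2
  simpa [ofReal_norm] using h2

lemma Jw_measurable {χ : ℝ → ℝ} (hχ : ChiOK χ) (Θ : Polarization) (p q : ℝ) :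
    Measurable (Jw χ Θ p q) := by
  unfold Jw
  refine Measurable.tsum fun n => ?_
  have h1 := psi_measurable hχ Θ n true
  have h2 := psi_measurable hχ Θ n false
  simp only [Tw, ← psi_true, ← psi_false]
  fun_prop

lemma l2_le {η δ : ℝ} {χ : ℝ → ℝ} (hχ : ChiOK χ) (Θ : Polarization) (u : ℝ × ℝ → ℂ)
    (hu : SmoothSupp η δ u) :
    eLpNorm u 2 volume ≤ (NNReal.sqrt (8 * (4 : ℝ) ^ (-(0 : ℝ))).toNNReal : ℝ≥0) *
      anorm χ Θ 1 0 u := by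
  have hc := hu.1.continuous
  have hs := cpt_supp hu.2
  have hFc := FT_continuous u (hc.integrable_of_hasCompactSupport hs)
  refine weight_le _ (fun ξ => ENNReal.ofReal ((1 + en ξ ^ 2) ^ (0 : ℝ))) (Jw χ Θ 1 0)
    (fun ξ => ‖FT u ξ‖ₑ ^ 2) ?_ (anorm_sq hχ Θ 1 0 u hFc)
    (fun ξ => Jw_ge hχ Θ 1 0 le_rfl zero_le_one ξ)
  rw [eLpNorm_sq, ← planch_c u hc hs]
  simp

lemma part_c (η δ ε : ℝ) (hη : 0 < η) (hδ : 0 < δ) (hε₁ : 0 < ε) (hε₂ : ε < 1 / 2) (χ : ℝ → ℝ)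
    (hχ : ChiOK χ) (Θ : Polarization)
    (u : ℕ → (ℝ × ℝ → ℂ)) (hu : ∀ n, SmoothSupp η δ (u n))
    (hb : ∀ n, anorm χ Θ 1 0 (u n) ≤ 1) :
      ∃ φ : ℕ → ℕ, StrictMono φ ∧
        ∀ ε' : ℝ, 0 < ε' → ∃ N : ℕ, ∀ m n : ℕ, N ≤ m → N ≤ n →
          anorm χ Θ (1 - ε) (-ε) (u (φ m) - u (φ n)) ≤ ENNReal.ofReal ε' := by
  have hc := fun n => (hu n).1.continuous
  have hs := fun n => cpt_supp (hu n).2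
  have hi := fun n => (hc n).integrable_of_hasCompactSupport (μ := volume) (hs n)
  have hFc := fun n => FT_continuous (u n) (hi n)
  have hFm := fun n => (hFc n).measurable
  obtain ⟨K, hK⟩ : ∃ K : ℝ≥0, ∀ n, ∫⁻ x, ‖u n x‖ₑ ^ 2 ≤ K := by
    refine ⟨(NNReal.sqrt (8 * (4 : ℝ) ^ (-(0 : ℝ))).toNNReal : ℝ≥0) ^ 2, fun n => ?_⟩
    rw [← eLpNorm_sq, ENNReal.coe_pow]
    gcongr
    refine (l2_le hχ Θ (u n) (hu n)).trans ?_
    exact mul_le_of_le_one_right' (hb n)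
  set B : ℝ := (volume (Rset η δ)).toReal + K with hBdef
  have hB0 : 0 ≤ B := by positivity
  have hl1 := fun n => l1_bound (u n) (hc n) (hu n).2 K (hK n)
  have hFB : ∀ n ξ, ‖FT (u n) ξ‖ ≤ B := fun n ξ => (FT_bound (u n) ξ).trans (hl1 n)
  obtain ⟨φ, hφ, hcau⟩ := subseq_cauchy (fun n => FT (u n)) B ((2 * Real.pi * (η + 2 * δ)) * B) hFB
    (by
      intro k ξ ζ
      refine (FT_lip (u k) (hi k) (hu k).2 hη hδ ξ ζ).trans ?_
      rw [mul_right_comm]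
      gcongr
      exact hl1 k)
  refine ⟨φ, hφ, fun ε' hε' => ?_⟩
  have hlim : Tendsto (fun M : ℕ => (2 : ℝ) ^ (-(2 * ε * M)) * 4) atTop (𝓝 0) := by
    have e : ∀ M : ℕ, (2 : ℝ) ^ (-(2 * ε * M)) = ((2 : ℝ) ^ (-(2 * ε))) ^ M := by
      intro M
      rw [← Real.rpow_natCast, ← Real.rpow_mul (by norm_num)]; ring_nf
    simp_rw [e]
    have := (tendsto_pow_atTop_nhds_zero_of_lt_one (r := (2 : ℝ) ^ (-(2 * ε))) (by positivity)
      (Real.rpow_lt_one_of_one_lt_of_neg (by norm_num) (by linarith))).mul_const 4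
    simpa using this
  obtain ⟨M, hM⟩ := (hlim.eventually (gt_mem_nhds (show (0 : ℝ) < ε' ^ 2 / 2 by positivity))).exists
  set D : Set (ℝ × ℝ) := {ξ | en ξ < 2 ^ M} with hD
  have hDm : MeasurableSet D := measurableSet_lt en_continuous.measurable measurable_const
  have hDv : volume D < ∞ := by
    refine lt_of_le_of_lt (measure_mono (t := Metric.closedBall 0 (2 ^ M)) ?_)
      (isCompact_closedBall _ _).measure_lt_top
    intro ξ hξ
    rw [mem_closedBall_zero_iff]
    have h1 : en ξ < 2 ^ M := hξ
    have h2 : |ξ.1| ≤ en ξ := Real.abs_le_sqrt (by nlinarith [sq_nonneg ξ.2])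
    have h3 : |ξ.2| ≤ en ξ := Real.abs_le_sqrt (by nlinarith [sq_nonneg ξ.1])
    rw [Prod.norm_def]
    exact max_le (h2.trans h1.le) (h3.trans h1.le)
  -- low frequencies
  let c : ℝ≥0∞ := ((2 * (4 : ℝ) ^ (1 - ε)).toNNReal : ℝ≥0∞) *
      ENNReal.ofReal ((1 + (2 ^ M) ^ 2) ^ (1 - ε))
  have hcfin : c ≠ ∞ := by simp [c, ENNReal.mul_eq_top]
  have hlow : Tendsto (fun mn : ℕ × ℕ => c * ∫⁻ ξ in D, ‖FT (u (φ mn.1)) ξ - FT (u (φ mn.2)) ξ‖ₑ ^ 2)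
      atTop (𝓝 0) := by
    have h0 : Tendsto (fun mn : ℕ × ℕ => ∫⁻ ξ in D, ‖FT (u (φ mn.1)) ξ - FT (u (φ mn.2)) ξ‖ₑ ^ 2)
        atTop (𝓝 (∫⁻ ξ in D, 0)) := by
      apply tendsto_lintegral_filter_of_dominated_convergence
        (fun _ => 2 * ENNReal.ofReal B ^ 2 + 2 * ENNReal.ofReal B ^ 2)
      · filter_upwards with mn
        have := hFm (φ mn.1)
        have := hFm (φ mn.2)
        fun_prop
      · filter_upwards with mn
        filter_upwards with ξ
        refine (enorm_sub_sq_le _ _).trans ?_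
        gcongr
        · rw [← ofReal_norm]; exact ENNReal.ofReal_le_ofReal (hFB _ _)
        · rw [← ofReal_norm]; exact ENNReal.ofReal_le_ofReal (hFB _ _)
      · rw [lintegral_const]
        refine ENNReal.mul_ne_top ?_ (by simpa using hDv.ne)
        simp [ENNReal.mul_eq_top]
      · filter_upwards with ξ
        have h1 := hcau ξ
        have h2 : Tendsto (fun mn : ℕ × ℕ => ‖FT (u (φ mn.1)) ξ - FT (u (φ mn.2)) ξ‖)
            atTop (𝓝 0) := by
          rw [Metric.tendsto_atTop]
          intro e he
          obtain ⟨N, hN⟩ := Metric.cauchySeq_iff.1 h1 e he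
          refine ⟨(N, N), fun mn hmn => ?_⟩
          have := hN mn.1 hmn.1 mn.2 hmn.2
          rw [dist_eq_norm] at this
          simpa using this
        have h3 : Tendsto (fun mn : ℕ × ℕ =>
            ENNReal.ofReal (‖FT (u (φ mn.1)) ξ - FT (u (φ mn.2)) ξ‖ ^ 2)) atTop (𝓝 0) := by
          have := ENNReal.tendsto_ofReal (h2.pow 2)
          simpa using this
        refine h3.congr fun mn => ?_
        rw [ENNReal.ofReal_pow (norm_nonneg _), ofReal_norm]
    simp only [lintegral_zero] at h0
    have := ENNReal.Tendsto.const_mul h0 (Or.inr hcfin)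
    simpa using this
  have hpos : (0 : ℝ≥0∞) < ENNReal.ofReal (ε' ^ 2 / 2) := by
    rw [ENNReal.ofReal_pos]; positivity
  obtain ⟨⟨N1, N2⟩, hN⟩ := Filter.eventually_atTop.1 (hlow.eventually (gt_mem_nhds hpos))
  refine ⟨max N1 N2, fun m n hm hn => ?_⟩
  have hlow' := hN (m, n) ⟨(le_max_left _ _).trans hm, (le_max_right _ _).trans hn⟩
  simp only at hlow'
  rw [← ENNReal.pow_le_pow_left_iff (n := 2) (by norm_num)]
  have hFsub : ∀ ξ, FT (u (φ m) - u (φ n)) ξ = FT (u (φ m)) ξ - FT (u (φ n)) ξ :=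
    FT_sub _ _ (hi _) (hi _)
  rw [anorm_sq hχ Θ _ _ _ (FT_continuous _ ((hi _).sub (hi _)))]
  simp_rw [hFsub]
  rw [← lintegral_add_compl _ hDm]
  have hJ1 : ∀ k, ∫⁻ ξ, Jw χ Θ 1 0 ξ * ‖FT (u k) ξ‖ₑ ^ 2 ≤ 1 := by
    intro k
    rw [← anorm_sq hχ Θ 1 0 _ (hFc k)]
    exact pow_le_one₀ zero_le (hb k)
  have hJm := Jw_measurable hχ Θ 1 0
  have p1 : ∫⁻ ξ in D, Jw χ Θ (1 - ε) (-ε) ξ * ‖FT (u (φ m)) ξ - FT (u (φ n)) ξ‖ₑ ^ 2 ≤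
      c * ∫⁻ ξ in D, ‖FT (u (φ m)) ξ - FT (u (φ n)) ξ‖ₑ ^ 2 := by
    rw [← lintegral_const_mul' _ _ hcfin]
    apply setLIntegral_mono' hDm
    intro ξ hξ
    gcongr
    refine (Jw_le hχ Θ (1 - ε) (-ε) (by linarith) (by linarith) ξ).trans ?_
    have h1 : en ξ < 2 ^ M := hξ
    have h0 := en_nonneg ξ
    have h2 : 0 ≤ 1 - ε := by linarith
    simp only [c]
    gcongr
  have p2 : ∫⁻ ξ in Dᶜ, Jw χ Θ (1 - ε) (-ε) ξ * ‖FT (u (φ m)) ξ - FT (u (φ n)) ξ‖ₑ ^ 2 ≤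
      ENNReal.ofReal ((2 : ℝ) ^ (-(2 * ε * M)) * 4) := by
    calc _ ≤ ∫⁻ ξ in Dᶜ, ENNReal.ofReal ((2 : ℝ) ^ (-(2 * ε * M))) *
            (2 * (Jw χ Θ 1 0 ξ * ‖FT (u (φ m)) ξ‖ₑ ^ 2) +
             2 * (Jw χ Θ 1 0 ξ * ‖FT (u (φ n)) ξ‖ₑ ^ 2)) := by
          apply setLIntegral_mono' hDm.compl
          intro ξ hξ
          have h1 : (2 : ℝ) ^ M ≤ en ξ := not_lt.1 hξ
          have h2 := Jw_eps hχ Θ 1 0 ε hε₁ M ξ (Or.inr h1)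
          rw [zero_sub] at h2
          refine (mul_le_mul' h2 (enorm_sub_sq_le _ _)).trans (le_of_eq ?_)
          ring
      _ ≤ ∫⁻ ξ, ENNReal.ofReal ((2 : ℝ) ^ (-(2 * ε * M))) *
            (2 * (Jw χ Θ 1 0 ξ * ‖FT (u (φ m)) ξ‖ₑ ^ 2) +
             2 * (Jw χ Θ 1 0 ξ * ‖FT (u (φ n)) ξ‖ₑ ^ 2)) := setLIntegral_le_lintegral _ _
      _ ≤ ENNReal.ofReal ((2 : ℝ) ^ (-(2 * ε * M))) * (2 * 1 + 2 * 1) := by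
          have := hFm (φ m)
          rw [lintegral_const_mul' _ _ (by simp), lintegral_add_left (by fun_prop),
            lintegral_const_mul' _ _ (by simp), lintegral_const_mul' _ _ (by simp)]
          gcongr
          · exact hJ1 _
          · exact hJ1 _
      _ = _ := by
          rw [ENNReal.ofReal_mul (by positivity)]
          congr 1
          norm_num
  calc _ ≤ ENNReal.ofReal (ε' ^ 2 / 2) + ENNReal.ofReal (ε' ^ 2 / 2) := by
        refine add_le_add (p1.trans hlow'.le) (p2.trans ?_)
        exact ENNReal.ofReal_le_ofReal hM.le
    _ = ENNReal.ofReal ε' ^ 2 := by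
        rw [← ENNReal.ofReal_add (by positivity) (by positivity), ← ENNReal.ofReal_pow hε'.le]
        congr 1; ring

/-- Lemma 2.2. For polarizations `Θ' < Θ`:
(a) `C¹(R) ⊂ W¹(R) ⊂ W_*(R;Θ) ⊂ L²(R)` and `W^{1-ε}(R) ⊂ W_†(R;Θ) ⊂ W^{-ε}(R)`
continuously; (b) `W_*(R;Θ) ⊂ W_*(R;Θ')` and `W_†(R;Θ) ⊂ W_†(R;Θ')` continuously;
(c) the inclusion `W_*(R;Θ) ⊂ W_†(R;Θ)` is compact (every `‖·‖_Θ`-bounded sequence has a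
subsequence that is Cauchy for `|·|_Θ`). -/
theorem statement7 (r : ℕ) (hr : 3 ≤ r) (η δ ε : ℝ) (hη : 0 < η) (hδ : 0 < δ)
    (hε₁ : 0 < ε) (hε₂ : ε < 1 / 2) (χ : ℝ → ℝ) (hχ : ChiOK χ)
    (Θ Θ' : Polarization) (hΘ : PolLt Θ' Θ) :
    -- (a) C¹(R) ⊂ W¹(R)
    ((∃ C : ℝ≥0, ∀ u : ℝ × ℝ → ℂ, ContDiff ℝ 1 u → Function.support u ⊆ Rset η δ →
        wnorm 1 u ≤ C * ENNReal.ofReal (⨆ x : ℝ × ℝ, (‖u x‖ + ‖fderiv ℝ u x‖))) ∧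
    -- (a) W¹(R) ⊂ W_*(R;Θ)
      (∃ C : ℝ≥0, ∀ u : ℝ × ℝ → ℂ, SmoothSupp η δ u →
        anorm χ Θ 1 0 u ≤ C * wnorm 1 u) ∧
    -- (a) W_*(R;Θ) ⊂ L²(R)
      (∃ C : ℝ≥0, ∀ u : ℝ × ℝ → ℂ, SmoothSupp η δ u →
        eLpNorm u 2 volume ≤ C * anorm χ Θ 1 0 u) ∧
    -- (a) W^{1-ε}(R) ⊂ W_†(R;Θ)
      (∃ C : ℝ≥0, ∀ u : ℝ × ℝ → ℂ, SmoothSupp η δ u →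
        anorm χ Θ (1 - ε) (-ε) u ≤ C * wnorm (1 - ε) u) ∧
    -- (a) W_†(R;Θ) ⊂ W^{-ε}(R)
      (∃ C : ℝ≥0, ∀ u : ℝ × ℝ → ℂ, SmoothSupp η δ u →
        wnorm (-ε) u ≤ C * anorm χ Θ (1 - ε) (-ε) u)) ∧
    -- (b)
    ((∃ C : ℝ≥0, ∀ u : ℝ × ℝ → ℂ, SmoothSupp η δ u →
        anorm χ Θ' 1 0 u ≤ C * anorm χ Θ 1 0 u) ∧
      (∃ C : ℝ≥0, ∀ u : ℝ × ℝ → ℂ, SmoothSupp η δ u →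
        anorm χ Θ' (1 - ε) (-ε) u ≤ C * anorm χ Θ (1 - ε) (-ε) u)) ∧
    -- (c)
    (∀ u : ℕ → (ℝ × ℝ → ℂ), (∀ n, SmoothSupp η δ (u n)) →
      (∀ n, anorm χ Θ 1 0 (u n) ≤ 1) →
      ∃ φ : ℕ → ℕ, StrictMono φ ∧
        ∀ ε' : ℝ, 0 < ε' → ∃ N : ℕ, ∀ m n : ℕ, N ≤ m → N ≤ n →
          anorm χ Θ (1 - ε) (-ε) (u (φ m) - u (φ n)) ≤ ENNReal.ofReal ε') := by
  have hF : ∀ u : ℝ × ℝ → ℂ, SmoothSupp η δ u → Continuous (FT u) := fun u hu =>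
    FT_continuous u (hu.1.continuous.integrable_of_hasCompactSupport (cpt_supp hu.2))
  refine ⟨⟨⟨_, fun u h1 h2 => part_a1 η δ u h1 h2⟩, ?_,
    ⟨_, fun u hu => l2_le hχ Θ u hu⟩, ?_, ?_⟩,
    ⟨?_, ?_⟩,
    fun u hu hb => part_c η δ ε hη hδ hε₁ hε₂ χ hχ Θ u hu hb⟩
  · exact ⟨_, fun u hu => weight_le _ _ _ _ (anorm_sq hχ Θ 1 0 u (hF u hu)) (wnorm_sq 1 u)
      (Jw_le hχ Θ 1 0 (by norm_num) (by norm_num))⟩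
  · exact ⟨_, fun u hu => weight_le _ _ _ _ (anorm_sq hχ Θ (1 - ε) (-ε) u (hF u hu)) (wnorm_sq (1 - ε) u)
      (Jw_le hχ Θ (1 - ε) (-ε) (by linarith) (by linarith))⟩
  · exact ⟨_, fun u hu => weight_le _ _ _ _ (wnorm_sq (-ε) u) (anorm_sq hχ Θ (1 - ε) (-ε) u (hF u hu))
      (Jw_ge hχ Θ (1 - ε) (-ε) (by linarith) (by linarith))⟩
  · exact ⟨_, fun u hu => weight_le _ _ _ _ (anorm_sq hχ Θ' 1 0 u (hF u hu)) (anorm_sq hχ Θ 1 0 u (hF u hu))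
      (Jw_pol hχ Θ Θ' hΘ 1 0 (by norm_num))⟩
  · exact ⟨_, fun u hu => weight_le _ _ _ _ (anorm_sq hχ Θ' (1 - ε) (-ε) u (hF u hu))
      (anorm_sq hχ Θ (1 - ε) (-ε) u (hF u hu))
      (Jw_pol hχ Θ Θ' hΘ (1 - ε) (-ε) (by linarith))⟩

end AngleMult
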